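/- arXiv:2302.05352 — 2 statements merged into one kernel-verified Lean document; each statement's English description precedes it below -/
import Mathlib

section
/- Let (X, 𝒯, P, ≤, {σ_x : x ∈ X}) be a typed topological space. For any x ∈ X and p ∈ P, the type-p-connected component satisfies p⊢CL₁(p⊢C(x)) = p⊢C(x) and p⊢tr(p⊢C(x)) = p⊢C(x). -/
open Set

/-- A typed topological space: a topological space `X` together with a partially
ordered set `P` of types and, for each `x : X`, a partial assignment `σ x` of
types to open sets containing `x`, such that on its domain the assignment is
order-reflecting: `σ x U ≤ σ x V ↔ U ⊆ V`. -/
structure TypedSpace (X : Type*) (P : Type*) [TopologicalSpace X] [PartialOrder P] where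
  σ : X → Set X → Option P
  dom_mem : ∀ x U p, σ x U = some p → IsOpen U ∧ x ∈ U
  mono : ∀ x U V pU pV, σ x U = some pU → σ x V = some pV → (pU ≤ pV ↔ U ⊆ V)

namespace TypedSpace

variable {X P : Type*} [TopologicalSpace X] [PartialOrder P]

/-- `U` is a type-`p` open neighborhood of `x`, written `p ⊢ U(x)`. -/
def IsNbhd (T : TypedSpace X P) (p : P) (x : X) (U : Set X) : Prop :=
  T.σ x U = some p

/-- `x` is a `p`-accumulation point of `A`: every type-`p` open neighborhood
of `x` meets `A`. -/
def IsAccPt (T : TypedSpace X P) (p : P) (A : Set X) (x : X) : Prop :=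
  ∀ U, T.IsNbhd p x U → (U ∩ A).Nonempty

/-- The direct `p`-closure `p⊢CL₁(A) = A ∪ {x : x is a p-accumulation point of A}`. -/
def CL1 (T : TypedSpace X P) (p : P) (A : Set X) : Set X :=
  A ∪ {x | T.IsAccPt p A x}

/-- Iterated `p`-closures: `p⊢CL₀(A) = A`, `p⊢CLₙ₊₁(A) = p⊢CL₁(p⊢CLₙ(A))`. -/
def CLn (T : TypedSpace X P) (p : P) : ℕ → Set X → Set X
  | 0, A => A
  | n + 1, A => T.CL1 p (T.CLn p n A)

/-- The transitive `p`-closure `p⊢tr(A) = ⋃ₙ p⊢CLₙ(A)`. -/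
def tr (T : TypedSpace X P) (p : P) (A : Set X) : Set X :=
  ⋃ n, T.CLn p n A

/-- The tracks: `p⊢Track₀(A) = A`, and `p⊢Trackᵢ(A) = p⊢CLᵢ(A) \ p⊢CLᵢ₋₁(A)` for `i ≥ 1`. -/
def Track (T : TypedSpace X P) (p : P) (i : ℕ) (A : Set X) : Set X :=
  if i = 0 then A else T.CLn p i A \ T.CLn p (i - 1) A

/-- `Umin` assigns to each point a least type-`p` open neighborhood. -/
def HasLeast (T : TypedSpace X P) (p : P) (Umin : X → Set X) : Prop :=
  ∀ x, T.IsNbhd p x (Umin x) ∧ ∀ V, T.IsNbhd p x V → Umin x ⊆ V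

/-- The type of English-text "σ has least p-neighborhood": some least neighborhood
assignment exists. -/
def HasLeastNbhd (T : TypedSpace X P) (p : P) : Prop :=
  ∃ Umin : X → Set X, T.HasLeast p Umin

/-- `A` is type-`p`-connected: there do not exist two collections of type-`p`
open neighborhoods `{p⊢U(xᵢ) : i ∈ I}`, `{p⊢V(xⱼ) : j ∈ J}` with `I, J` nonempty,
`A = {xᵢ} ∪ {xⱼ}` and `(⋃ U(xᵢ)) ∩ (⋃ V(xⱼ)) = ∅`. -/
def Connected (T : TypedSpace X P) (p : P) (A : Set X) : Prop :=
  ¬ ∃ (s t : Set X) (U V : X → Set X),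
      s.Nonempty ∧ t.Nonempty ∧ A = s ∪ t ∧
      (∀ x ∈ s, T.IsNbhd p x (U x)) ∧ (∀ y ∈ t, T.IsNbhd p y (V y)) ∧
      (⋃ x ∈ s, U x) ∩ (⋃ y ∈ t, V y) = ∅

/-- The type-`p`-connected component of `x`: the union of all type-`p`-connected
subsets containing `x`. -/
def Comp (T : TypedSpace X P) (p : P) (x : X) : Set X :=
  ⋃₀ {A : Set X | x ∈ A ∧ T.Connected p A}

/-- The space is `p`-symmetrically typed. -/
def SymTyped (T : TypedSpace X P) (p : P) : Prop :=
  ∀ x y : X, (∃ U, T.IsNbhd p x U ∧ y ∉ U) → ∃ V, T.IsNbhd p y V ∧ x ∉ V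

/-- `D` and `D'` are `p`-closure disjoint. -/
def ClosureDisjoint (T : TypedSpace X P) (p : P) (D D' : Set X) : Prop :=
  T.tr p D ∩ T.tr p D' = ∅

/-- `D` is `p`-closure connected: it cannot be partitioned into two nonempty
`p`-closure disjoint subsets. -/
def ClosureConnected (T : TypedSpace X P) (p : P) (D : Set X) : Prop :=
  ¬ ∃ E E' : Set X, E.Nonempty ∧ E'.Nonempty ∧ E ∪ E' = D ∧ E ∩ E' = ∅ ∧
      T.ClosureDisjoint p E E'

/-- The cluster `p⊢tr(x)` is straight. -/
def StraightAt (T : TypedSpace X P) (p : P) (x : X) : Prop :=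
  ∀ i j : ℕ, 0 < i → i < j → ∀ y z : X,
    y ∈ T.Track p i {x} → z ∈ T.Track p j {x} →
      y ∈ T.CL1 p {z} → z ∈ T.CL1 p {y}

/-- `X` is `p`-straight: every cluster `p⊢tr(x)` is straight. -/
def Straight (T : TypedSpace X P) (p : P) : Prop :=
  ∀ x : X, T.StraightAt p x

/-- `X` is `(p, q)`-uniformly typed. -/
def UniformlyTyped (T : TypedSpace X P) (p q : P) : Prop :=
  ∀ (x : X) (j k : ℕ), (T.CLn p j {x} ∩ T.CLn q k {x}).Nonempty →
    T.CLn p j {x} ⊆ T.CLn q k {x}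

/-- The cluster `q⊢tr(x)` is `(p,q)`-straight: for `y, z, w ∈ q⊢tr(x)` with
`z, w ∈ p⊢tr(y)`, `index_{p,y}(z) ≤ index_{p,y}(w)` implies
`index_{q,y}(z) ≤ index_{q,y}(w)` (indices being the track numbers). -/
def PQStraightAt (T : TypedSpace X P) (p q : P) (x : X) : Prop :=
  ∀ y z w : X, y ∈ T.tr q {x} → z ∈ T.tr q {x} → w ∈ T.tr q {x} →
    z ∈ T.tr p {y} → w ∈ T.tr p {y} →
    ∀ iz iw : ℕ, z ∈ T.Track p iz {y} → w ∈ T.Track p iw {y} → iz ≤ iw →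
      ∀ jz jw : ℕ, z ∈ T.Track q jz {y} → w ∈ T.Track q jw {y} → jz ≤ jw

end TypedSpace

/-!
A set is connected iff, whenever two separated sets cover it, it lies in one of them. Connected sets
through `x` therefore all lie on the side of `x`, so their union, the component of `x`, is
connected. Of two separated sets each is disjoint from the direct closure of the other, so the
direct closure of a connected set is connected. The component, being the largest connected set
through `x`, then contains its own direct closure.
-/

namespace TypedSpace

variable {X P : Type*} [TopologicalSpace X] [PartialOrder P]
  {T : TypedSpace X P} {p : P} {A B s t : Set X} {x : X}

theorem IsNbhd.mem {U : Set X} (h : T.IsNbhd p x U) : x ∈ U :=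
  (T.dom_mem x U p h).2

theorem isAccPt_of_mem (hx : x ∈ A) : T.IsAccPt p A x :=
  fun _ hU => ⟨x, hU.mem, hx⟩

theorem mem_cl1_iff_isAccPt : x ∈ T.CL1 p A ↔ T.IsAccPt p A x :=
  or_iff_right_of_imp isAccPt_of_mem

theorem subset_cl1 (T : TypedSpace X P) (p : P) (A : Set X) : A ⊆ T.CL1 p A :=
  subset_union_left

theorem cl1_mono (h : A ⊆ B) : T.CL1 p A ⊆ T.CL1 p B := fun _ hx =>
  mem_cl1_iff_isAccPt.mpr fun U hU =>
    (mem_cl1_iff_isAccPt.mp hx U hU).mono (inter_subset_inter_right U h)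

theorem cln_eq_self (hA : T.CL1 p A = A) (n : ℕ) : T.CLn p n A = A := by
  induction n with
  | zero => rfl
  | succ n ih => rw [CLn, ih, hA]

theorem tr_eq_self (hA : T.CL1 p A = A) : T.tr p A = A := by
  simp only [tr, cln_eq_self hA, iUnion_const]

/-- `s` and `t` are separated by type-`p` neighborhoods: each of their points can be given a
type-`p` open neighborhood so that those of points of `s` miss those of points of `t`. The set `A`
is type-`p`-connected iff it is not the union of two nonempty sets separated in this sense. -/
def SeparatedNbhds (T : TypedSpace X P) (p : P) (s t : Set X) : Prop :=
  ∃ U V : X → Set X, (∀ x ∈ s, T.IsNbhd p x (U x)) ∧ (∀ y ∈ t, T.IsNbhd p y (V y)) ∧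
    (⋃ x ∈ s, U x) ∩ (⋃ y ∈ t, V y) = ∅

namespace SeparatedNbhds

theorem symm (h : T.SeparatedNbhds p s t) : T.SeparatedNbhds p t s := by
  obtain ⟨U, V, hU, hV, hUV⟩ := h
  exact ⟨V, U, hV, hU, by rwa [inter_comm]⟩

theorem mono {s' t' : Set X} (h : T.SeparatedNbhds p s t) (hs : s' ⊆ s) (ht : t' ⊆ t) :
    T.SeparatedNbhds p s' t' := by
  obtain ⟨U, V, hU, hV, hUV⟩ := h
  refine ⟨U, V, fun x hx => hU x (hs hx), fun y hy => hV y (ht hy), ?_⟩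
  exact subset_eq_empty
    (inter_subset_inter (biUnion_subset_biUnion_left hs) (biUnion_subset_biUnion_left ht)) hUV

theorem disjoint_cl1_left (h : T.SeparatedNbhds p s t) : Disjoint (T.CL1 p s) t := by
  obtain ⟨U, V, hU, hV, hUV⟩ := h
  refine disjoint_left.mpr fun y hys hyt => ?_
  obtain ⟨z, hzV, hzs⟩ := mem_cl1_iff_isAccPt.mp hys (V y) (hV y hyt)
  exact hUV.subset ⟨mem_biUnion hzs (hU z hzs).mem, mem_biUnion hyt hzV⟩

theorem disjoint (h : T.SeparatedNbhds p s t) : Disjoint s t :=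
  h.disjoint_cl1_left.mono_left (subset_cl1 T p s)

end SeparatedNbhds

theorem connected_iff_subset_or_subset :
    T.Connected p A ↔ ∀ s t, A ⊆ s ∪ t → T.SeparatedNbhds p s t → A ⊆ s ∨ A ⊆ t := by
  constructor
  · intro hA s t hAst hst
    by_contra! h
    obtain ⟨⟨a, ha, has⟩, b, hb, hbt⟩ := h.imp not_subset.mp not_subset.mp
    obtain ⟨U, V, hUV⟩ := hst.mono (s' := A ∩ s) (t' := A ∩ t) inter_subset_right inter_subset_right
    refine hA ⟨A ∩ s, A ∩ t, U, V, ⟨b, hb, (hAst hb).resolve_right hbt⟩,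
      ⟨a, ha, (hAst ha).resolve_left has⟩, ?_, hUV⟩
    rw [← inter_union_distrib_left, inter_eq_left.mpr hAst]
  · rintro h ⟨s, t, U, V, hs, ht, rfl, hUV⟩
    have hst : T.SeparatedNbhds p s t := ⟨U, V, hUV⟩
    rcases h s t Subset.rfl hst with hsub | hsub
    · exact ht.ne_empty (hst.disjoint.symm.eq_bot_of_le (subset_union_right.trans hsub))
    · exact hs.ne_empty (hst.disjoint.eq_bot_of_le (subset_union_left.trans hsub))

theorem connected_singleton (T : TypedSpace X P) (p : P) (x : X) : T.Connected p {x} :=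
  connected_iff_subset_or_subset.mpr fun s t hst _ => by
    simpa only [singleton_subset_iff, mem_union] using hst

theorem connected_sUnion {S : Set (Set X)} (hx : ∀ A ∈ S, x ∈ A)
    (hS : ∀ A ∈ S, T.Connected p A) : T.Connected p (⋃₀ S) := by
  refine connected_iff_subset_or_subset.mpr fun s t hSst hst => ?_
  have subset_or (A) (hA : A ∈ S) : A ⊆ s ∨ A ⊆ t :=
    connected_iff_subset_or_subset.mp (hS A hA) s t ((subset_sUnion_of_mem hA).trans hSst) hst
  by_cases hxs : x ∈ s
  · have hxt : x ∉ t := disjoint_left.mp hst.disjoint hxs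
    exact .inl <| sUnion_subset fun A hA =>
      (subset_or A hA).resolve_right fun h => hxt (h (hx A hA))
  · exact .inr <| sUnion_subset fun A hA =>
      (subset_or A hA).resolve_left fun h => hxs (h (hx A hA))

theorem Connected.cl1 (hA : T.Connected p A) : T.Connected p (T.CL1 p A) := by
  have cl1_subset {s t : Set X} (hst : T.SeparatedNbhds p s t) (hcover : T.CL1 p A ⊆ s ∪ t)
      (hAs : A ⊆ s) : T.CL1 p A ⊆ s :=
    (hst.disjoint_cl1_left.mono_left (cl1_mono hAs)).subset_left_of_subset_union hcover
  refine connected_iff_subset_or_subset.mpr fun s t hcover hst => ?_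
  exact (connected_iff_subset_or_subset.mp hA s t ((subset_cl1 T p A).trans hcover) hst).imp
    (cl1_subset hst hcover) (cl1_subset hst.symm (union_comm s t ▸ hcover))

theorem Connected.subset_comp (hA : T.Connected p A) (hx : x ∈ A) : A ⊆ T.Comp p x :=
  subset_sUnion_of_mem ⟨hx, hA⟩

theorem mem_comp (T : TypedSpace X P) (p : P) (x : X) : x ∈ T.Comp p x :=
  (connected_singleton T p x).subset_comp (mem_singleton x) (mem_singleton x)

theorem connected_comp (T : TypedSpace X P) (p : P) (x : X) : T.Connected p (T.Comp p x) :=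
  connected_sUnion (fun _ hA => hA.1) fun _ hA => hA.2

theorem cl1_comp (T : TypedSpace X P) (p : P) (x : X) : T.CL1 p (T.Comp p x) = T.Comp p x := by
  have hsub : T.Comp p x ⊆ T.CL1 p (T.Comp p x) := subset_cl1 T p _
  exact ((connected_comp T p x).cl1.subset_comp (hsub (mem_comp T p x))).antisymm hsub

end TypedSpace

/-- `p⊢CL₁(p⊢C(x)) = p⊢C(x)` and `p⊢tr(p⊢C(x)) = p⊢C(x)`. -/
theorem stmt_5 {X P : Type*} [TopologicalSpace X] [PartialOrder P]
    (T : TypedSpace X P) (p : P) (x : X) :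
    T.CL1 p (T.Comp p x) = T.Comp p x ∧ T.tr p (T.Comp p x) = T.Comp p x :=
  ⟨T.cl1_comp p x, TypedSpace.tr_eq_self (T.cl1_comp p x)⟩
end

section
/- Let (X, 𝒯, P, ≤, {σ_x : x ∈ X}) be a typed topological space with X finite. For any subset D ⊆ X and any type p ∈ P, there exists a subset port_p(D) ⊆ D satisfying: (1) D ⊆ p⊢tr(port_p(D)); and (2) for every two distinct points z, w ∈ port_p(D), both z ∉ p⊢tr(w) and w ∉ p⊢tr(z) hold. -/
open Set

/-!
By antisymmetry of the order on types, a point has at most one type-`p` neighborhood, so `p⊢CL₁`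
commutes with nonempty unions and `p⊢tr` is an idempotent closure operator. For any closure
operator, no point of a minimal generating set lies in the closure of the remaining points.
-/

section ClosureOperator

variable {α : Type*} (c : ClosureOperator (Set α)) {A S : Set α}

theorem exists_subset_minimal_subset_closure (hS : S.Finite) (hA : A ⊆ c S) :
    ∃ B ⊆ S, Minimal (A ⊆ c ·) B := by
  have finite_generators : {B | B ⊆ S ∧ A ⊆ c B}.Finite := hS.finite_subsets.subset fun _ hB ↦ hB.1
  obtain ⟨B, -, ⟨hBS, hAB⟩, hmin⟩ := finite_generators.exists_le_minimal ⟨Subset.rfl, hA⟩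
  exact ⟨B, hBS, hAB, fun C hC hCB ↦ hmin ⟨hCB.trans hBS, hC⟩ hCB⟩

variable {c}

theorem notMem_closure_sdiff_singleton_of_minimal (hS : Minimal (A ⊆ c ·) S) {z : α}
    (hz : z ∈ S) : z ∉ c (S \ {z}) := by
  intro hzc
  have hSc : S ⊆ c (S \ {z}) :=
    (subset_insert_sdiff_singleton z S).trans (insert_subset hzc (c.le_closure _))
  have hAc : A ⊆ c (S \ {z}) := hS.prop.trans (c.le_closure_iff.1 hSc)
  exact hS.notMem_of_prop_sdiff_singleton hAc hz

theorem notMem_closure_singleton_of_minimal (hS : Minimal (A ⊆ c ·) S) {z w : α}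
    (hz : z ∈ S) (hw : w ∈ S) (hzw : z ≠ w) : z ∉ c {w} := by
  have hw_sub : {w} ⊆ S \ {z} := singleton_subset_iff.2 ⟨hw, hzw.symm⟩
  exact fun h ↦ notMem_closure_sdiff_singleton_of_minimal hS hz (c.monotone hw_sub h)

end ClosureOperator

namespace TypedSpace

variable {X P : Type*} [TopologicalSpace X] [PartialOrder P]

theorem IsNbhd.unique {T : TypedSpace X P} {p : P} {x : X} {U V : Set X}
    (hU : T.IsNbhd p x U) (hV : T.IsNbhd p x V) : U = V :=
  Subset.antisymm ((T.mono x U V p p hU hV).1 le_rfl) ((T.mono x V U p p hV hU).1 le_rfl)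

theorem IsAccPt.mono {T : TypedSpace X P} {p : P} {A B : Set X} {x : X}
    (hx : T.IsAccPt p A x) (hAB : A ⊆ B) : T.IsAccPt p B x :=
  fun U hU ↦ (hx U hU).mono (inter_subset_inter_right U hAB)

variable (T : TypedSpace X P) (p : P)

theorem isAccPt_iUnion {ι : Sort*} [Nonempty ι] (A : ι → Set X) (x : X) :
    T.IsAccPt p (⋃ i, A i) x ↔ ∃ i, T.IsAccPt p (A i) x := by
  constructor
  · intro hx
    by_cases hnbhd : ∃ U, T.IsNbhd p x U
    · obtain ⟨U, hU⟩ := hnbhd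
      obtain ⟨y, hyU, hyA⟩ := hx U hU
      obtain ⟨i, hyi⟩ := mem_iUnion.1 hyA
      exact ⟨i, fun V hV ↦ ⟨y, hU.unique hV ▸ hyU, hyi⟩⟩
    · exact ⟨Classical.arbitrary ι, fun U hU ↦ (hnbhd ⟨U, hU⟩).elim⟩
  · rintro ⟨i, hi⟩
    exact hi.mono (subset_iUnion A i)

theorem CL1_iUnion {ι : Sort*} [Nonempty ι] (A : ι → Set X) :
    T.CL1 p (⋃ i, A i) = ⋃ i, T.CL1 p (A i) := by
  simp only [CL1, isAccPt_iUnion, ofPred_exists, iUnion_union_distrib]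

theorem CL1_mono : Monotone (T.CL1 p) :=
  fun _ _ hAB ↦ union_subset_union hAB fun _ hx ↦ hx.mono hAB

theorem subset_tr (A : Set X) : A ⊆ T.tr p A :=
  subset_iUnion (T.CLn p · A) 0

theorem CL1_tr_subset (A : Set X) : T.CL1 p (T.tr p A) ⊆ T.tr p A :=
  calc
    T.CL1 p (T.tr p A) = ⋃ n, T.CLn p (n + 1) A := T.CL1_iUnion p (T.CLn p · A)
    _ ⊆ T.tr p A := iUnion_subset fun n ↦ subset_iUnion (T.CLn p · A) (n + 1)

theorem tr_subset_of_CL1_subset {A B : Set X} (hAB : A ⊆ B) (hB : T.CL1 p B ⊆ B) :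
    T.tr p A ⊆ B := by
  refine iUnion_subset fun n ↦ ?_
  induction n with
  | zero => exact hAB
  | succ n ih => exact (T.CL1_mono p ih).trans hB

/-- The transitive `p`-closure `A ↦ p⊢tr(A)`, bundled as a closure operator on subsets of `X`. -/
def trClosure : ClosureOperator (Set X) :=
  .mk₂ (T.tr p) (T.subset_tr p) fun _ B hAB ↦ T.tr_subset_of_CL1_subset p hAB (T.CL1_tr_subset p B)

end TypedSpace

theorem stmt_11_general {X P : Type*} [TopologicalSpace X] [PartialOrder P]
    (T : TypedSpace X P) (p : P) {D : Set X} (hD : D.Finite) :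
    ∃ port : Set X, port ⊆ D ∧ D ⊆ T.tr p port ∧
      ∀ z ∈ port, ∀ w ∈ port, z ≠ w → z ∉ T.tr p {w} ∧ w ∉ T.tr p {z} := by
  obtain ⟨port, hport, hmin⟩ :=
    exists_subset_minimal_subset_closure (T.trClosure p) hD (T.subset_tr p D)
  exact ⟨port, hport, hmin.prop, fun z hz w hw hzw ↦
    ⟨notMem_closure_singleton_of_minimal hmin hz hw hzw,
      notMem_closure_singleton_of_minimal hmin hw hz hzw.symm⟩⟩

/-- In a finite typed topological space, every `D ⊆ X` admits a
`port_p(D) ⊆ D` with `D ⊆ p⊢tr(port_p(D))` such that distinct points of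
`port_p(D)` are not in each other's transitive p-closures. -/
theorem stmt_11 {X P : Type*} [TopologicalSpace X] [PartialOrder P] [Finite X]
    (T : TypedSpace X P) (p : P) (D : Set X) :
    ∃ port : Set X, port ⊆ D ∧ D ⊆ T.tr p port ∧
      ∀ z ∈ port, ∀ w ∈ port, z ≠ w → z ∉ T.tr p {w} ∧ w ∉ T.tr p {z} :=
  stmt_11_general T p D.toFinite
end
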